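/- If the eigenvalues a_1 > a_2 > ⋯ > a_d of A are all distinct and λ_i := lim_{p→∞} λ_i(p) satisfies λ_i = a_i b_i for all i = 1,…,d, then lim_{p→∞} (A^{p/2} B^p A^{p/2})^{1/p} = V diag(a_1 b_1, a_2 b_2, …, a_d b_d) V*. -/

import Mathlib

open Matrix Filter Topology Finset
open scoped ComplexOrder

/-- Functional-calculus power of a (Hermitian, in practice positive semidefinite)
matrix, with the convention `0 ^ r = 0` for `r > 0`. -/
noncomputable def psdPow {d : ℕ} (A : Matrix (Fin d) (Fin d) ℂ) (r : ℝ) :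
    Matrix (Fin d) (Fin d) ℂ :=
  if hA : A.IsHermitian then
    (hA.eigenvectorUnitary : Matrix (Fin d) (Fin d) ℂ) *
      Matrix.diagonal (fun i => ((hA.eigenvalues i ^ r : ℝ) : ℂ)) *
      star (hA.eigenvectorUnitary : Matrix (Fin d) (Fin d) ℂ)
  else 0

/-- The eigenvalues of a Hermitian matrix, sorted in decreasing order
(with multiplicities). -/
noncomputable def eigsDesc {d : ℕ} (A : Matrix (Fin d) (Fin d) ℂ) : Fin d → ℝ :=
  if hA : A.IsHermitian then
    fun i => hA.eigenvalues (Tuple.sort hA.eigenvalues i.rev)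
  else 0

/-- `Zmat A B p = (A^{p/2} B^p A^{p/2})^{1/p}`. -/
noncomputable def Zmat {d : ℕ} (A B : Matrix (Fin d) (Fin d) ℂ) (p : ℝ) :
    Matrix (Fin d) (Fin d) ℂ :=
  psdPow (psdPow A (p / 2) * psdPow B p * psdPow A (p / 2)) (1 / p)

/-!
Write `Z_p = V Q diag(λ(p)) Q* V*` with `Q = Q_p` unitary, so that
`Q diag(λ(p)^p) Q* = D U diag(b^p) U* D` with `D = diag(a^{p/2})` and `U = V* W`. Comparing
`k × k` principal minors of both sides by the Cauchy–Binet formula gives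
`|det Q[J, {1,…,k}]|² ≤ (∏_{j ∈ J} a_j · b_1 ⋯ b_k / (λ_1(p) ⋯ λ_k(p)))^p`, and as `λ_i(p)` tends
to `a_i b_i`, the base tends to a number below `1` if `J ≠ {1,…,k}` and `a_k b_k > 0`. Summing
these minors over all `J ∋ j` recovers the mass `∑_{i ≤ k} |Q_{ji}|²`, so the block of `Q` below its
leading `k × k` block vanishes in the limit; by unitarity the block to the right of it has the same
mass. Hence `Q_{ji} → 0` whenever `a_i b_i ≠ a_j b_j`, which is all that the convergence
`Q diag(λ(p)) Q* → diag(a_i b_i)` requires.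
-/

section Minors

variable {m n : Type*} [Fintype m] [DecidableEq m]

theorem det_submatrix_eq_zero_of_not_injective {l R : Type*} [CommRing R]
    (N : Matrix l n R) (g : m → l) {f : m → n} (hf : ¬ Function.Injective f) :
    (N.submatrix g f).det = 0 := by
  obtain ⟨x, y, hxy, hne⟩ := Function.not_injective_iff.mp hf
  exact det_zero_of_column_eq hne fun i => by simp [hxy]

theorem norm_det_submatrix_comp_perm {𝕜 : Type*} [RCLike 𝕜] (N : Matrix m n 𝕜) (f : m → n)
    (s : Equiv.Perm m) : ‖(N.submatrix id (f ∘ s)).det‖ = ‖(N.submatrix id f).det‖ := by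
  have h : N.submatrix id (f ∘ s) = (N.submatrix id f).submatrix id s := rfl
  rw [h, det_permute', norm_mul]
  rcases Int.units_eq_one_or (Equiv.Perm.sign s) with hs | hs <;> simp [hs]

end Minors

section CauchyBinet

variable {m n R : Type*} [Fintype m] [DecidableEq m] [Fintype n] [CommRing R]

theorem det_mul_eq_sum_prod_mul_det (M : Matrix m n R) (N : Matrix n m R) :
    (M * N).det = ∑ f : m → n, (∏ i, M i (f i)) * (N.submatrix f id).det := by
  classical
  have hrows : M * N = fun i => ∑ j, M i j • N j := by
    ext i k
    simp [mul_apply]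
  calc (M * N).det
      = (detRowAlternating (R := R)).toMultilinearMap (fun i => ∑ j, M i j • N j) := by
        rw [hrows]; rfl
    _ = ∑ f : m → n, (∏ i, M i (f i)) * (N.submatrix f id).det := by
        simp only [MultilinearMap.map_sum, MultilinearMap.map_smul_univ, smul_eq_mul]
        rfl

/- Averaging the row expansion over all permutations of the rows of `M` turns its monomials into
minors, and avoids having to choose an ordering of the `m`-element subsets of `n`. -/
theorem factorial_mul_det_mul (M : Matrix m n R) (N : Matrix n m R) :
    ((Fintype.card m).factorial : R) * (M * N).det =
      ∑ f : m → n, (M.submatrix id f).det * (N.submatrix f id).det := by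
  have hperm (s : Equiv.Perm m) : (M * N).det =
      ∑ f : m → n, ((Equiv.Perm.sign s : ℤ) : R) * (∏ i, M i (f (s i))) *
        (N.submatrix f id).det := by
    rw [det_mul_eq_sum_prod_mul_det, ← Equiv.sum_comp (s.arrowCongr (Equiv.refl n)).symm]
    refine sum_congr rfl fun f _ => ?_
    have hf : (s.arrowCongr (Equiv.refl n)).symm f = f ∘ s := by ext; simp
    have hN : N.submatrix (f ∘ s) id = (N.submatrix f id).submatrix s id := rfl
    rw [hf, hN, det_permute]
    simp only [Function.comp_apply]
    ring
  calc ((Fintype.card m).factorial : R) * (M * N).det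
      = ∑ _s : Equiv.Perm m, (M * N).det := by
        rw [sum_const, card_univ, Fintype.card_perm, nsmul_eq_mul]
    _ = ∑ f : m → n, ∑ s : Equiv.Perm m, ((Equiv.Perm.sign s : ℤ) : R) *
          (∏ i, M i (f (s i))) * (N.submatrix f id).det := by
        rw [sum_congr rfl fun s _ => hperm s, sum_comm]
    _ = _ := by
        refine sum_congr rfl fun f _ => ?_
        rw [← sum_mul, ← det_transpose (M.submatrix id f), det_apply' (M.submatrix id f)ᵀ]
        rfl

end CauchyBinet

section ConjDiagonal

variable {l m n 𝕜 : Type*} [RCLike 𝕜] [Fintype n] [DecidableEq n]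

/-- The matrix `N diag(w) N*` with real weights `w`. For `N` unitary this is a diagonalization with
eigenvalues `w`; `N` may be rectangular so that principal submatrices have the same form. -/
def conjDiagonal (N : Matrix m n 𝕜) (w : n → ℝ) : Matrix m m 𝕜 :=
  N * diagonal (fun i => (w i : 𝕜)) * Nᴴ

theorem posSemidef_conjDiagonal [Finite m] (N : Matrix m n 𝕜) {w : n → ℝ} (hw : ∀ i, 0 ≤ w i) :
    (conjDiagonal N w).PosSemidef := by
  refine PosSemidef.mul_mul_conjTranspose_same (posSemidef_diagonal_iff.mpr fun i => ?_) N
  exact_mod_cast hw i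

theorem isHermitian_conjDiagonal (N : Matrix m n 𝕜) (w : n → ℝ) :
    (conjDiagonal N w).IsHermitian :=
  isHermitian_mul_mul_conjTranspose N
    (isHermitian_diagonal_of_self_adjoint _ (by ext i; simp))

theorem mul_conjDiagonal_mul_conjTranspose [Fintype m] (M : Matrix l m 𝕜) (N : Matrix m n 𝕜)
    (w : n → ℝ) : M * conjDiagonal N w * Mᴴ = conjDiagonal (M * N) w := by
  simp only [conjDiagonal, conjTranspose_mul, Matrix.mul_assoc]

theorem submatrix_conjDiagonal (N : Matrix m n 𝕜) (w : n → ℝ) (f : l → m) :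
    (conjDiagonal N w).submatrix f f = conjDiagonal (N.submatrix f id) w := by
  ext i j
  simp [conjDiagonal, mul_apply]

theorem conjDiagonal_ite_eq_mul_conjTranspose_sub (N : Matrix m n 𝕜) (j : n) :
    conjDiagonal N (fun l => if l = j then 0 else 1) =
      N * Nᴴ - replicateCol Unit (fun i => N i j) * (replicateCol Unit (fun i => N i j))ᴴ := by
  ext x y
  have hterm (l : n) : N x l * ((if l = j then 0 else 1 : ℝ) : 𝕜) * star (N y l) =
      N x l * star (N y l) - if l = j then N x l * star (N y l) else 0 := by
    by_cases hl : l = j <;> simp [hl]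
  rw [conjDiagonal, mul_apply]
  simp only [mul_diagonal, conjTranspose_apply, hterm, sum_sub_distrib, sum_ite_eq', mem_univ,
    if_true]
  simp [mul_apply]

end ConjDiagonal

section GramDeterminant

variable {m n 𝕜 : Type*} [RCLike 𝕜] [Fintype m] [DecidableEq m] [Fintype n]

theorem sum_norm_det_submatrix_sq {N : Matrix m n 𝕜} (hN : N * Nᴴ = 1) :
    ∑ f : m → n, ‖(N.submatrix id f).det‖ ^ 2 = (Fintype.card m).factorial := by
  have h := factorial_mul_det_mul N Nᴴ
  simp only [← conjTranspose_submatrix, det_conjTranspose, hN, det_one, mul_one, RCLike.star_def,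
    RCLike.mul_conj] at h
  exact_mod_cast h.symm

variable [DecidableEq n]

theorem factorial_mul_det_conjDiagonal (N : Matrix m n 𝕜) (w : n → ℝ) :
    ((Fintype.card m).factorial : 𝕜) * (conjDiagonal N w).det =
      ((∑ f : m → n, (∏ i, w (f i)) * ‖(N.submatrix id f).det‖ ^ 2 : ℝ) : 𝕜) := by
  have hsub (f : m → n) : (diagonal (fun i => (w i : 𝕜)) * Nᴴ).submatrix f id =
      diagonal (fun i => (w (f i) : 𝕜)) * (N.submatrix id f)ᴴ := by
    ext i j
    simp [diagonal_mul]
  rw [conjDiagonal, Matrix.mul_assoc, factorial_mul_det_mul]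
  push_cast
  refine sum_congr rfl fun f _ => ?_
  rw [hsub, det_mul, det_diagonal, det_conjTranspose, ← RCLike.mul_conj, RCLike.star_def]
  ring

theorem factorial_mul_norm_det_conjDiagonal (N : Matrix m n 𝕜) {w : n → ℝ} (hw : ∀ i, 0 ≤ w i) :
    ((Fintype.card m).factorial : ℝ) * ‖(conjDiagonal N w).det‖ =
      ∑ f : m → n, (∏ i, w (f i)) * ‖(N.submatrix id f).det‖ ^ 2 := by
  have hsum : 0 ≤ ∑ f : m → n, (∏ i, w (f i)) * ‖(N.submatrix id f).det‖ ^ 2 :=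
    sum_nonneg fun f _ => mul_nonneg (prod_nonneg fun i _ => hw _) (sq_nonneg _)
  rw [← RCLike.norm_of_nonneg hsum (K := 𝕜), ← factorial_mul_det_conjDiagonal, norm_mul,
    RCLike.norm_natCast]

theorem prod_mul_norm_det_submatrix_sq_le (N : Matrix m n 𝕜) {w : n → ℝ} (hw : ∀ i, 0 ≤ w i)
    {c : m → n} (hc : Function.Injective c) :
    (∏ i, w (c i)) * ‖(N.submatrix id c).det‖ ^ 2 ≤ ‖(conjDiagonal N w).det‖ := by
  set g : (m → n) → ℝ := fun f => (∏ i, w (f i)) * ‖(N.submatrix id f).det‖ ^ 2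
  have hperm (s : Equiv.Perm m) : g (c ∘ s) = g c := by
    simp only [g, norm_det_submatrix_comp_perm, Function.comp_apply,
      Equiv.prod_comp s fun i => w (c i)]
  have hcomp : Function.Injective fun s : Equiv.Perm m => c ∘ s := fun s t hst =>
    Equiv.ext fun i => hc (congrFun hst i)
  refine le_of_mul_le_mul_left ?_ (Nat.cast_pos.mpr (Fintype.card m).factorial_pos)
  calc ((Fintype.card m).factorial : ℝ) * g c
      = ∑ s : Equiv.Perm m, g (c ∘ s) := by
        simp only [hperm, sum_const, card_univ, Fintype.card_perm, nsmul_eq_mul]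
    _ = ∑ f ∈ univ.map ⟨_, hcomp⟩, g f := by rw [sum_map]; rfl
    _ ≤ ∑ f, g f := sum_le_univ_sum_of_nonneg fun f =>
        mul_nonneg (prod_nonneg fun i _ => hw _) (sq_nonneg _)
    _ = _ := (factorial_mul_norm_det_conjDiagonal N hw).symm

/- With weight `0` at `j` and `1` elsewhere, the weighted sum of minors runs over the `f` avoiding
`j`, while the Gram determinant is `det (1 - v v*)` for the `j`-th column `v` of `N`. -/
theorem sum_norm_det_submatrix_sq_of_mem_range {N : Matrix m n 𝕜} (hN : N * Nᴴ = 1) (j : n) :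
    ∑ f : m → n with ∃ i, f i = j, ‖(N.submatrix id f).det‖ ^ 2 =
      (Fintype.card m).factorial * ∑ i, ‖N i j‖ ^ 2 := by
  set w : n → ℝ := fun l => if l = j then 0 else 1
  have hprod (f : m → n) : ∏ i, w (f i) = if ∃ i, f i = j then 0 else 1 := by
    split_ifs with hf
    · obtain ⟨i, hi⟩ := hf
      exact prod_eq_zero (mem_univ i) (if_pos hi)
    · exact prod_eq_one fun i _ => if_neg fun hi => hf ⟨i, hi⟩
  have hdet : (conjDiagonal N w).det = ((1 - ∑ i, ‖N i j‖ ^ 2 : ℝ) : 𝕜) := by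
    rw [conjDiagonal_ite_eq_mul_conjTranspose_sub, hN, det_one_sub_mul_comm]
    simp [det_unique, mul_apply, RCLike.conj_mul]
  have havoid : (Fintype.card m).factorial * (1 - ∑ i, ‖N i j‖ ^ 2) =
      ∑ f : m → n with ¬ ∃ i, f i = j, ‖(N.submatrix id f).det‖ ^ 2 := by
    have h := factorial_mul_det_conjDiagonal N w
    simp only [hdet, hprod, ite_mul, zero_mul, one_mul] at h
    rw [sum_filter]
    simp only [ite_not]
    exact_mod_cast h
  have htotal := sum_norm_det_submatrix_sq hN
  rw [← sum_filter_add_sum_filter_not univ fun f : m → n => ∃ i, f i = j, ← havoid] at htotal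
  linarith

end GramDeterminant

section Antitone

variable {k d : ℕ} {β : Fin d → ℝ}

theorem prod_comp_le_prod_castLE (hk : k ≤ d) (hβ : Antitone β) (hβ0 : ∀ i, 0 ≤ β i)
    {f : Fin k → Fin d} (hf : Function.Injective f) :
    ∏ i, β (f i) ≤ ∏ i, β (Fin.castLE hk i) := by
  have hcard : (univ.image f).card = k := by
    rw [card_image_of_injective _ hf, card_univ, Fintype.card_fin]
  set g := (univ.image f).orderEmbOfFin hcard
  have hle (i : Fin k) : Fin.castLE hk i ≤ g i := by
    obtain ⟨i, hi⟩ := i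
    induction i with
    | zero => exact Nat.zero_le _
    | succ i ih =>
      exact (Nat.succ_le_of_lt ((Fin.le_def.mp (ih (by omega))).trans_lt
        (g.strictMono (Fin.mk_lt_mk.mpr i.lt_succ_self))))
  calc ∏ i, β (f i) = ∏ j ∈ univ.image f, β j := (prod_image hf.injOn).symm
    _ = ∏ i, β (g i) := by
        rw [← image_orderEmbOfFin_univ _ hcard, prod_image g.injective.injOn]
    _ ≤ ∏ i, β (Fin.castLE hk i) :=
        prod_le_prod (fun i _ => hβ0 _) fun i _ => hβ (hle i)

theorem prod_comp_lt_prod_castLE {m : Fin d} (hβ : Antitone β) (hβ0 : ∀ i, 0 ≤ β i)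
    {f : Fin (m + 1) → Fin d} (hf : Function.Injective f) {l : Fin (m + 1)}
    (hl : β (f l) < β m) : ∏ i, β (f i) < ∏ i, β (Fin.castLE m.isLt i) := by
  have hm : 0 < β m := (hβ0 _).trans_lt hl
  calc ∏ i, β (f i) = (∏ i, β (f (l.succAbove i))) * β (f l) := by
        rw [Fin.prod_univ_succAbove _ l, mul_comm]
    _ ≤ (∏ i, β (Fin.castLE m.isLt.le i)) * β (f l) :=
        mul_le_mul_of_nonneg_right (prod_comp_le_prod_castLE m.isLt.le hβ hβ0
          (hf.comp Fin.succAbove_right_injective)) (hβ0 _)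
    _ < (∏ i, β (Fin.castLE m.isLt.le i)) * β m :=
        mul_lt_mul_of_pos_left hl (prod_pos fun i _ => hm.trans_le (hβ i.isLt.le))
    _ = ∏ i, β (Fin.castLE m.isLt i) := by rw [Fin.prod_univ_castSucc]; rfl

end Antitone

section MinorBound

variable {k d : ℕ} {𝕜 : Type*} [RCLike 𝕜]

theorem norm_det_conjDiagonal_le_prod_castLE (hk : k ≤ d) {N : Matrix (Fin k) (Fin d) 𝕜}
    (hN : N * Nᴴ = 1) {w : Fin d → ℝ} (hw : Antitone w) (hw0 : ∀ i, 0 ≤ w i) :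
    ‖(conjDiagonal N w).det‖ ≤ ∏ i, w (Fin.castLE hk i) := by
  have hterm (f : Fin k → Fin d) : (∏ i, w (f i)) * ‖(N.submatrix id f).det‖ ^ 2 ≤
      (∏ i, w (Fin.castLE hk i)) * ‖(N.submatrix id f).det‖ ^ 2 := by
    by_cases hf : Function.Injective f
    · exact mul_le_mul_of_nonneg_right (prod_comp_le_prod_castLE hk hw hw0 hf) (sq_nonneg _)
    · simp [det_submatrix_eq_zero_of_not_injective N id hf]
  refine le_of_mul_le_mul_left ?_ (Nat.cast_pos.mpr (Fintype.card (Fin k)).factorial_pos)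
  calc _ = ∑ f : Fin k → Fin d, (∏ i, w (f i)) * ‖(N.submatrix id f).det‖ ^ 2 :=
        factorial_mul_norm_det_conjDiagonal N hw0
    _ ≤ ∑ f : Fin k → Fin d, (∏ i, w (Fin.castLE hk i)) * ‖(N.submatrix id f).det‖ ^ 2 :=
        sum_le_sum fun f _ => hterm f
    _ = _ := by rw [← mul_sum, sum_norm_det_submatrix_sq hN, mul_comm]

theorem submatrix_mul_conjTranspose_submatrix {m n : Type*} [Fintype n] [DecidableEq m]
    [DecidableEq n] {U : Matrix n n 𝕜} (hU : U ∈ unitaryGroup n 𝕜) {f : m → n}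
    (hf : Function.Injective f) : U.submatrix f id * (U.submatrix f id)ᴴ = 1 := by
  have h : U * Uᴴ = 1 := mem_unitaryGroup_iff.mp hU
  rw [conjTranspose_submatrix, ← submatrix_mul _ _ f id f Function.bijective_id, h,
    submatrix_one f hf]

theorem norm_det_submatrix_sq_mul_prod_le (hk : k ≤ d) {U Q : Matrix (Fin d) (Fin d) 𝕜}
    (hU : U ∈ unitaryGroup (Fin d) 𝕜) {α β σ : Fin d → ℝ} (hβ : Antitone β)
    (hβ0 : ∀ i, 0 ≤ β i) (hσ0 : ∀ i, 0 ≤ σ i)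
    (h : conjDiagonal Q σ = conjDiagonal (diagonal (fun i => (α i : 𝕜)) * U) β)
    {f : Fin k → Fin d} (hf : Function.Injective f) :
    (∏ i, σ (Fin.castLE hk i)) * ‖(Q.submatrix f (Fin.castLE hk)).det‖ ^ 2 ≤
      (∏ i, α (f i)) ^ 2 * ∏ i, β (Fin.castLE hk i) := by
  set D : Matrix (Fin k) (Fin k) 𝕜 := diagonal fun i => (α (f i) : 𝕜) with hD
  have hrows : (diagonal (fun i => (α i : 𝕜)) * U).submatrix f id = D * U.submatrix f id := by
    ext i j
    simp [hD, diagonal_mul]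
  have hdet : ‖(D * conjDiagonal (U.submatrix f id) β * Dᴴ).det‖ =
      (∏ i, α (f i)) ^ 2 * ‖(conjDiagonal (U.submatrix f id) β).det‖ := by
    rw [det_mul, det_mul, det_conjTranspose, norm_mul, norm_mul, norm_star, hD, det_diagonal,
      ← RCLike.ofReal_prod, RCLike.norm_ofReal, ← sq_abs (∏ i, α (f i))]
    ring
  calc _ ≤ ‖(conjDiagonal (Q.submatrix f id) σ).det‖ :=
        prod_mul_norm_det_submatrix_sq_le _ hσ0 (Fin.castLE_injective hk)
    _ = ‖(D * conjDiagonal (U.submatrix f id) β * Dᴴ).det‖ := by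
        rw [← submatrix_conjDiagonal, h, submatrix_conjDiagonal, hrows,
          mul_conjDiagonal_mul_conjTranspose]
    _ = (∏ i, α (f i)) ^ 2 * ‖(conjDiagonal (U.submatrix f id) β).det‖ := hdet
    _ ≤ _ := mul_le_mul_of_nonneg_left (norm_det_conjDiagonal_le_prod_castLE hk
        (submatrix_mul_conjTranspose_submatrix hU hf) hβ hβ0) (sq_nonneg _)

end MinorBound

section UnitaryMass

variable {n 𝕜 ι : Type*} [RCLike 𝕜] [Fintype n] [DecidableEq n]

theorem sum_sum_compl_eq_of_mem_doublyStochastic {R : Type*} [Ring R] [PartialOrder R]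
    [IsOrderedRing R] {M : Matrix n n R} (hM : M ∈ doublyStochastic R n) (s : Finset n) :
    ∑ j ∈ s, ∑ i ∈ sᶜ, M j i = ∑ j ∈ sᶜ, ∑ i ∈ s, M j i := by
  have h : ∑ j ∈ s, ∑ i, M j i = ∑ i ∈ s, ∑ j, M j i := by
    simp only [sum_row_of_mem_doublyStochastic hM, sum_col_of_mem_doublyStochastic hM]
  simp only [← sum_add_sum_compl s, sum_add_distrib] at h
  rw [sum_comm, add_left_cancel_iff] at h
  rw [h, sum_comm]

theorem of_norm_sq_mem_doublyStochastic {Q : Matrix n n 𝕜} (hQ : Q ∈ unitaryGroup n 𝕜) :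
    of (fun j i => ‖Q j i‖ ^ 2) ∈ doublyStochastic ℝ n := by
  refine mem_doublyStochastic_iff_sum.mpr ⟨fun _ _ => sq_nonneg _, fun j => ?_, fun i => ?_⟩
  · have h := congrFun₂ (mem_unitaryGroup_iff.mp hQ) j j
    simp only [mul_apply, star_apply, one_apply_eq, RCLike.star_def, RCLike.mul_conj] at h
    exact_mod_cast h
  · have h := congrFun₂ (mem_unitaryGroup_iff'.mp hQ) i i
    simp only [mul_apply, star_apply, one_apply_eq, RCLike.star_def, RCLike.conj_mul] at h
    exact_mod_cast h

theorem norm_sq_apply_le_sum_compl_sum {Q : Matrix n n 𝕜} (hQ : Q ∈ unitaryGroup n 𝕜)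
    {s : Finset n} {j i : n} (hj : j ∈ s) (hi : i ∉ s) :
    ‖Q j i‖ ^ 2 ≤ ∑ y ∈ sᶜ, ∑ x ∈ s, ‖Q y x‖ ^ 2 := by
  have hswap := sum_sum_compl_eq_of_mem_doublyStochastic (of_norm_sq_mem_doublyStochastic hQ) s
  simp only [of_apply] at hswap
  rw [← hswap]
  calc ‖Q j i‖ ^ 2 ≤ ∑ x ∈ sᶜ, ‖Q j x‖ ^ 2 :=
        single_le_sum (f := fun x => ‖Q j x‖ ^ 2) (fun _ _ => sq_nonneg _) (mem_compl.mpr hi)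
    _ ≤ ∑ y ∈ s, ∑ x ∈ sᶜ, ‖Q y x‖ ^ 2 :=
        single_le_sum (f := fun y => ∑ x ∈ sᶜ, ‖Q y x‖ ^ 2)
          (fun _ _ => sum_nonneg fun _ _ => sq_nonneg _) hj

theorem conjDiagonal_eq_diagonal_add_mul {Q : Matrix n n 𝕜} (hQ : Q ∈ unitaryGroup n 𝕜)
    (w t : n → ℝ) : conjDiagonal Q w =
      diagonal (fun i => (t i : 𝕜)) + of (fun j i => ((w i - t j : ℝ) : 𝕜) * Q j i) * Qᴴ := by
  have hQQ : Q * Qᴴ = 1 := mem_unitaryGroup_iff.mp hQ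
  have hdiff : of (fun j i => ((w i - t j : ℝ) : 𝕜) * Q j i) =
      Q * diagonal (fun i => (w i : 𝕜)) - diagonal (fun i => (t i : 𝕜)) * Q := by
    ext j i
    simp only [of_apply, Matrix.sub_apply, mul_diagonal, diagonal_mul, RCLike.ofReal_sub]
    ring
  rw [hdiff, Matrix.sub_mul, Matrix.mul_assoc (diagonal _), hQQ, Matrix.mul_one, conjDiagonal]
  abel

variable {l : Filter ι} {Q : ι → Matrix n n 𝕜}

theorem tendsto_zero_of_norm_sq_tendsto_zero {E : Type*} [NormedAddCommGroup E] {u : ι → E}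
    (h : Tendsto (fun x => ‖u x‖ ^ 2) l (𝓝 0)) : Tendsto u l (𝓝 0) := by
  rw [tendsto_zero_iff_norm_tendsto_zero]
  simpa [Real.sqrt_sq] using h.sqrt

theorem tendsto_apply_zero_of_compl_block (hQ : ∀ x, Q x ∈ unitaryGroup n 𝕜) {s : Finset n}
    (h : ∀ j ∉ s, ∀ i ∈ s, Tendsto (fun x => Q x j i) l (𝓝 0)) {j i : n} (hj : j ∈ s)
    (hi : i ∉ s) : Tendsto (fun x => Q x j i) l (𝓝 0) := by
  refine tendsto_zero_of_norm_sq_tendsto_zero ?_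
  refine squeeze_zero (fun x => sq_nonneg _)
    (fun x => norm_sq_apply_le_sum_compl_sum (hQ x) hj hi) ?_
  rw [← sum_const_zero (s := sᶜ)]
  refine tendsto_finsetSum _ fun y hy => ?_
  rw [← sum_const_zero (s := s)]
  exact tendsto_finsetSum _ fun z hz => by simpa using (h y (mem_compl.mp hy) z hz).norm.pow 2

theorem tendsto_conjDiagonal_diagonal (hQ : ∀ x, Q x ∈ unitaryGroup n 𝕜) {L : ι → n → ℝ}
    {t : n → ℝ} (hL : ∀ i, Tendsto (fun x => L x i) l (𝓝 (t i)))
    (hoff : ∀ j i, t j ≠ t i → Tendsto (fun x => Q x j i) l (𝓝 0)) :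
    Tendsto (fun x => conjDiagonal (Q x) (L x)) l (𝓝 (diagonal fun i => (t i : 𝕜))) := by
  have hbdd (j i : n) : IsBoundedUnder (· ≤ ·) l fun x => ‖Q x j i‖ :=
    isBoundedUnder_of ⟨1, fun x => entry_norm_bound_of_unitary (hQ x) j i⟩
  have hterm (j i : n) : Tendsto (fun x => ((L x i - t j : ℝ) : 𝕜) * Q x j i) l (𝓝 0) := by
    by_cases hji : t j = t i
    · have h0 : Tendsto (fun x => ((L x i - t j : ℝ) : 𝕜)) l (𝓝 0) := by
        rw [hji, ← RCLike.ofReal_zero, ← sub_self (t i)]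
        exact (RCLike.continuous_ofReal.tendsto _).comp ((hL i).sub_const _)
      exact h0.zero_mul_isBoundedUnder_le (hbdd j i)
    · have h0 := ((RCLike.continuous_ofReal (K := 𝕜)).tendsto _).comp ((hL i).sub_const (t j))
      simpa using h0.mul (hoff j i hji)
  have herr : Tendsto (fun x => of (fun j i => ((L x i - t j : ℝ) : 𝕜) * Q x j i) * (Q x)ᴴ) l
      (𝓝 0) := by
    refine tendsto_pi_nhds.mpr fun j => tendsto_pi_nhds.mpr fun k => ?_
    simp only [mul_apply, of_apply, conjTranspose_apply]
    rw [Matrix.zero_apply, ← sum_const_zero (s := (univ : Finset n))]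
    refine tendsto_finsetSum _ fun i _ => (hterm j i).zero_mul_isBoundedUnder_le ?_
    simpa only [Function.comp_def, norm_star] using hbdd k i
  simpa only [conjDiagonal_eq_diagonal_add_mul (hQ _) _ t, add_zero] using
    herr.const_add (diagonal fun i => (t i : 𝕜))

end UnitaryMass

section FunctionalCalculus

variable {n 𝕜 : Type*} [RCLike 𝕜] [Fintype n] [DecidableEq n]

theorem mul_diagonal_comp_eq_diagonal_comp_mul {m : Type*} [Fintype m] [DecidableEq m]
    {X : Matrix m n 𝕜} {μ : n → ℝ} {ν : m → ℝ}
    (h : X * diagonal (fun i => (μ i : 𝕜)) = diagonal (fun i => (ν i : 𝕜)) * X) (g : ℝ → ℝ) :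
    X * diagonal (fun i => (g (μ i) : 𝕜)) = diagonal (fun i => (g (ν i) : 𝕜)) * X := by
  ext i j
  have hij := congrFun₂ h i j
  rw [mul_diagonal, diagonal_mul, mul_comm] at hij ⊢
  by_cases hX : X i j = 0
  · simp [hX]
  · rw [RCLike.ofReal_injective (mul_right_cancel₀ hX hij)]

theorem conjDiagonal_comp_eq_conjDiagonal_comp {P Q : Matrix n n 𝕜} (hP : P ∈ unitaryGroup n 𝕜)
    (hQ : Q ∈ unitaryGroup n 𝕜) {μ ν : n → ℝ} (h : conjDiagonal P μ = conjDiagonal Q ν)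
    (g : ℝ → ℝ) :
    conjDiagonal P (fun i => g (μ i)) = conjDiagonal Q (fun i => g (ν i)) := by
  have hPP : Pᴴ * P = 1 := mem_unitaryGroup_iff'.mp hP
  have hPP' : P * Pᴴ = 1 := mem_unitaryGroup_iff.mp hP
  have hQQ : Qᴴ * Q = 1 := mem_unitaryGroup_iff'.mp hQ
  have hQQ' : Q * Qᴴ = 1 := mem_unitaryGroup_iff.mp hQ
  have hcomm : Qᴴ * P * diagonal (fun i => (μ i : 𝕜)) =
      diagonal (fun i => (ν i : 𝕜)) * (Qᴴ * P) := by
    calc _ = Qᴴ * conjDiagonal P μ * P := by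
          simp only [conjDiagonal, Matrix.mul_assoc, hPP, Matrix.mul_one]
      _ = Qᴴ * Q * diagonal (fun i => (ν i : 𝕜)) * (Qᴴ * P) := by
          rw [h]
          simp only [conjDiagonal, Matrix.mul_assoc]
      _ = _ := by rw [hQQ, Matrix.one_mul]
  calc conjDiagonal P (fun i => g (μ i))
      = Q * (Qᴴ * P * diagonal (fun i => (g (μ i) : 𝕜))) * Pᴴ := by
        simp only [conjDiagonal, ← Matrix.mul_assoc, hQQ', Matrix.one_mul]
    _ = conjDiagonal Q (fun i => g (ν i)) * (P * Pᴴ) := by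
        rw [mul_diagonal_comp_eq_diagonal_comp_mul hcomm g]
        simp only [conjDiagonal, Matrix.mul_assoc]
    _ = _ := by rw [hPP', Matrix.mul_one]

theorem conjDiagonal_eigenvectorUnitary {A : Matrix n n 𝕜} (hA : A.IsHermitian) :
    conjDiagonal (hA.eigenvectorUnitary : Matrix n n 𝕜) hA.eigenvalues = A := by
  conv_rhs => rw [hA.spectral_theorem, Unitary.conjStarAlgAut_apply]
  rfl

theorem conjDiagonal_submatrix_equiv {l m : Type*} [Fintype l] [DecidableEq l]
    (N : Matrix m n 𝕜) (w : n → ℝ) (e : l ≃ n) :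
    conjDiagonal (N.submatrix id e) (w ∘ e) = conjDiagonal N w := by
  ext i j
  rw [conjDiagonal, conjDiagonal, mul_apply, mul_apply]
  simp only [mul_diagonal, submatrix_apply, conjTranspose_apply, id, Function.comp_apply]
  exact Equiv.sum_comp e fun x => N i x * (w x : 𝕜) * star (N j x)

theorem submatrix_id_mem_unitaryGroup {R : Type*} [CommRing R] [StarRing R] {N : Matrix n n R}
    (hN : N ∈ unitaryGroup n R) (e : Equiv.Perm n) : N.submatrix id e ∈ unitaryGroup n R := by
  rw [mem_unitaryGroup_iff, star_eq_conjTranspose, conjTranspose_submatrix, submatrix_mul_equiv,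
    ← star_eq_conjTranspose, mem_unitaryGroup_iff.mp hN, submatrix_id_id]

end FunctionalCalculus

section PsdPow

variable {d : ℕ} {A B V W : Matrix (Fin d) (Fin d) ℂ}

theorem psdPow_eq_conjDiagonal (hA : A.IsHermitian) (r : ℝ) :
    psdPow A r = conjDiagonal (hA.eigenvectorUnitary : Matrix (Fin d) (Fin d) ℂ)
      (fun i => hA.eigenvalues i ^ r) := by
  rw [psdPow, dif_pos hA]
  rfl

theorem psdPow_conjDiagonal (hV : V ∈ unitaryGroup (Fin d) ℂ) (μ : Fin d → ℝ) (r : ℝ) :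
    psdPow (conjDiagonal V μ) r = conjDiagonal V (fun i => μ i ^ r) := by
  have hA := isHermitian_conjDiagonal V μ
  rw [psdPow_eq_conjDiagonal hA]
  exact conjDiagonal_comp_eq_conjDiagonal_comp hA.eigenvectorUnitary.2 hV
    (conjDiagonal_eigenvectorUnitary hA) (· ^ r)

theorem posSemidef_psdPow (hA : A.PosSemidef) (r : ℝ) : (psdPow A r).PosSemidef := by
  rw [psdPow_eq_conjDiagonal hA.isHermitian]
  exact posSemidef_conjDiagonal _ fun i => Real.rpow_nonneg (hA.eigenvalues_nonneg i) r

theorem psdPow_psdPow_one_div (hA : A.PosSemidef) {r : ℝ} (hr : r ≠ 0) :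
    psdPow (psdPow A (1 / r)) r = A := by
  have hH := hA.isHermitian
  rw [psdPow_eq_conjDiagonal hH, psdPow_conjDiagonal hH.eigenvectorUnitary.2]
  simp only [one_div, Real.rpow_inv_rpow (hA.eigenvalues_nonneg _) hr]
  exact conjDiagonal_eigenvectorUnitary hH

theorem eigsDesc_nonneg (hA : A.PosSemidef) (i : Fin d) : 0 ≤ eigsDesc A i := by
  rw [eigsDesc, dif_pos hA.isHermitian]
  exact hA.eigenvalues_nonneg _

theorem exists_conjDiagonal_eigsDesc (hA : A.IsHermitian) :
    ∃ Q ∈ unitaryGroup (Fin d) ℂ, A = conjDiagonal Q (eigsDesc A) := by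
  let e : Equiv.Perm (Fin d) := Fin.revPerm.trans (Tuple.sort hA.eigenvalues)
  have he : eigsDesc A = hA.eigenvalues ∘ e := by
    rw [eigsDesc, dif_pos hA]
    rfl
  refine ⟨_, submatrix_id_mem_unitaryGroup hA.eigenvectorUnitary.2 e, ?_⟩
  rw [he, conjDiagonal_submatrix_equiv, conjDiagonal_eigenvectorUnitary]

theorem posSemidef_psdPow_mul_psdPow_mul_psdPow (hA : A.PosSemidef) (hB : B.PosSemidef)
    (r s : ℝ) : (psdPow A r * psdPow B s * psdPow A r).PosSemidef := by
  have h := (posSemidef_psdPow hB s).mul_mul_conjTranspose_same (psdPow A r)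
  rwa [(posSemidef_psdPow hA r).isHermitian.eq] at h

theorem psdPow_mul_psdPow_mul_psdPow_conjDiagonal (hV : V ∈ unitaryGroup (Fin d) ℂ)
    (hW : W ∈ unitaryGroup (Fin d) ℂ) (a b : Fin d → ℝ) (r s : ℝ) :
    psdPow (conjDiagonal V a) r * psdPow (conjDiagonal W b) s * psdPow (conjDiagonal V a) r =
      conjDiagonal (V * (diagonal (fun i => ((a i ^ r : ℝ) : ℂ)) * (Vᴴ * W)))
        (fun i => b i ^ s) := by
  rw [psdPow_conjDiagonal hV, psdPow_conjDiagonal hW]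
  nth_rw 2 [← (isHermitian_conjDiagonal V fun i => a i ^ r).eq]
  rw [mul_conjDiagonal_mul_conjTranspose]
  simp only [conjDiagonal, Matrix.mul_assoc]
  rfl

theorem posSemidef_Zmat (hA : A.PosSemidef) (hB : B.PosSemidef) (p : ℝ) :
    (Zmat A B p).PosSemidef :=
  posSemidef_psdPow (posSemidef_psdPow_mul_psdPow_mul_psdPow hA hB _ _) _

theorem psdPow_Zmat (hA : A.PosSemidef) (hB : B.PosSemidef) {p : ℝ} (hp : p ≠ 0) :
    psdPow (Zmat A B p) p = psdPow A (p / 2) * psdPow B p * psdPow A (p / 2) :=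
  psdPow_psdPow_one_div (posSemidef_psdPow_mul_psdPow_mul_psdPow hA hB _ _) hp

theorem exists_Zmat_eq_conjDiagonal_mul (hA : A.PosSemidef) (hB : B.PosSemidef)
    (hV : V ∈ unitaryGroup (Fin d) ℂ) (p : ℝ) :
    ∃ Q ∈ unitaryGroup (Fin d) ℂ, Zmat A B p = conjDiagonal (V * Q) (eigsDesc (Zmat A B p)) := by
  obtain ⟨R, hR, hZ⟩ := exists_conjDiagonal_eigsDesc (posSemidef_Zmat hA hB p).isHermitian
  have hVV : V * star V = 1 := mem_unitaryGroup_iff.mp hV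
  exact ⟨star V * R, mul_mem (Unitary.star_mem hV) hR, by
    rwa [← Matrix.mul_assoc, hVV, Matrix.one_mul]⟩

theorem conjDiagonal_rpow_eq_of_Zmat_eq (hV : V ∈ unitaryGroup (Fin d) ℂ)
    (hW : W ∈ unitaryGroup (Fin d) ℂ) {Q : Matrix (Fin d) (Fin d) ℂ}
    (hQ : Q ∈ unitaryGroup (Fin d) ℂ) {a b μ : Fin d → ℝ} (ha : ∀ i, 0 ≤ a i)
    (hb : ∀ i, 0 ≤ b i) {p : ℝ} (hp : p ≠ 0)
    (h : Zmat (conjDiagonal V a) (conjDiagonal W b) p = conjDiagonal (V * Q) μ) :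
    conjDiagonal Q (fun i => μ i ^ p) =
      conjDiagonal (diagonal (fun i => ((a i ^ (p / 2) : ℝ) : ℂ)) * (Vᴴ * W))
        (fun i => b i ^ p) := by
  have hVV : Vᴴ * V = 1 := mem_unitaryGroup_iff'.mp hV
  have hcancel (N : Matrix (Fin d) (Fin d) ℂ) (w : Fin d → ℝ) :
      Vᴴ * conjDiagonal (V * N) w * Vᴴᴴ = conjDiagonal N w := by
    rw [mul_conjDiagonal_mul_conjTranspose, ← Matrix.mul_assoc, hVV, Matrix.one_mul]
  have hpow := psdPow_Zmat (posSemidef_conjDiagonal V ha) (posSemidef_conjDiagonal W hb) hp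
  rw [h, psdPow_conjDiagonal (mul_mem hV hQ), psdPow_mul_psdPow_mul_psdPow_conjDiagonal hV hW]
    at hpow
  rw [← hcancel, hpow, hcancel]

end PsdPow

section Decay

theorem tendsto_rpow_self_zero_of_tendsto_lt_one {u : ℝ → ℝ} {c : ℝ}
    (hu0 : ∀ᶠ p in atTop, 0 ≤ u p) (hu : Tendsto u atTop (𝓝 c)) (hc : c < 1) :
    Tendsto (fun p => u p ^ p) atTop (𝓝 0) := by
  obtain ⟨q, hq, hq1⟩ := exists_between (max_lt hc zero_lt_one)
  have hq0 : 0 < q := (le_max_right _ _).trans_lt hq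
  refine squeeze_zero' (hu0.mono fun p hp => Real.rpow_nonneg hp p) ?_
    (tendsto_rpow_atTop_of_base_lt_one q (by linarith) hq1)
  filter_upwards [hu0, hu.eventually_lt_const ((le_max_left _ _).trans_lt hq),
    eventually_ge_atTop 0] with p hp hlt hp0
  exact Real.rpow_le_rpow hp hlt.le hp0

theorem norm_sq_apply_le_sum_norm_det_submatrix_sq {m n 𝕜 : Type*} [RCLike 𝕜] [Fintype m]
    [DecidableEq m] [Fintype n] [DecidableEq n] {Q : Matrix n n 𝕜} (hQ : Q ∈ unitaryGroup n 𝕜)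
    {c : m → n} (hc : Function.Injective c) (j : n) (x : m) :
    ‖Q j (c x)‖ ^ 2 ≤ ∑ f : m → n with ∃ y, f y = j, ‖(Q.submatrix f c).det‖ ^ 2 := by
  have hrows : Qᴴ.submatrix c id * (Qᴴ.submatrix c id)ᴴ = 1 :=
    submatrix_mul_conjTranspose_submatrix (Unitary.star_mem hQ) hc
  have hdet (f : m → n) : ‖((Qᴴ.submatrix c id).submatrix id f).det‖ =
      ‖(Q.submatrix f c).det‖ := by
    rw [← norm_star, ← det_conjTranspose]
    simp only [conjTranspose_submatrix, conjTranspose_conjTranspose, submatrix_submatrix,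
      Function.id_comp, Function.comp_id]
  have hmass := sum_norm_det_submatrix_sq_of_mem_range hrows j
  simp only [hdet, submatrix_apply, conjTranspose_apply, id, norm_star] at hmass
  calc ‖Q j (c x)‖ ^ 2 ≤ ∑ y, ‖Q j (c y)‖ ^ 2 :=
        single_le_sum (f := fun y => ‖Q j (c y)‖ ^ 2) (fun _ _ => sq_nonneg _) (mem_univ x)
    _ ≤ (Fintype.card m).factorial * ∑ y, ‖Q j (c y)‖ ^ 2 :=
        le_mul_of_one_le_left (sum_nonneg fun _ _ => sq_nonneg _)
          (by exact_mod_cast (Fintype.card m).factorial_pos)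
    _ = _ := hmass.symm

variable {d : ℕ} {𝕜 : Type*} [RCLike 𝕜] {U : Matrix (Fin d) (Fin d) 𝕜}
  {Q : ℝ → Matrix (Fin d) (Fin d) 𝕜} {a b : Fin d → ℝ} {L : ℝ → Fin d → ℝ}

theorem norm_det_submatrix_sq_le_rpow {k : ℕ} (hk : k ≤ d) (hU : U ∈ unitaryGroup (Fin d) 𝕜)
    {P : Matrix (Fin d) (Fin d) 𝕜} {μ : Fin d → ℝ} (ha0 : ∀ i, 0 ≤ a i) (hb : Antitone b)
    (hb0 : ∀ i, 0 ≤ b i) (hμ0 : ∀ i, 0 ≤ μ i) {p : ℝ} (hp : 0 ≤ p)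
    (h : conjDiagonal P (fun i => μ i ^ p) =
      conjDiagonal (diagonal (fun i => ((a i ^ (p / 2) : ℝ) : 𝕜)) * U) (fun i => b i ^ p))
    (hμ : 0 < ∏ i, μ (Fin.castLE hk i)) {f : Fin k → Fin d} (hf : Function.Injective f) :
    ‖(P.submatrix f (Fin.castLE hk)).det‖ ^ 2 ≤
      ((∏ i, a (f i)) * (∏ i, b (Fin.castLE hk i)) / ∏ i, μ (Fin.castLE hk i)) ^ p := by
  have hA : 0 ≤ ∏ i, a (f i) := prod_nonneg fun _ _ => ha0 _
  have hB : 0 ≤ ∏ i, b (Fin.castLE hk i) := prod_nonneg fun _ _ => hb0 _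
  have hsq : (∏ i, a (f i) ^ (p / 2)) ^ 2 = (∏ i, a (f i)) ^ p := by
    rw [Real.finsetProd_rpow _ _ fun i _ => ha0 _, ← Real.rpow_mul_natCast hA, Nat.cast_ofNat,
      div_mul_cancel₀ p two_ne_zero]
  have hminor := norm_det_submatrix_sq_mul_prod_le hk hU
    (fun i j hij => Real.rpow_le_rpow (hb0 j) (hb hij) hp)
    (fun i => Real.rpow_nonneg (hb0 i) p) (fun i => Real.rpow_nonneg (hμ0 i) p) h hf
  rw [hsq, Real.finsetProd_rpow _ _ fun i _ => hμ0 _, Real.finsetProd_rpow _ _ fun i _ => hb0 _,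
    ← Real.mul_rpow hA hB, mul_comm] at hminor
  rwa [Real.div_rpow (mul_nonneg hA hB) hμ.le, le_div_iff₀ (Real.rpow_pos_of_pos hμ p)]

theorem tendsto_norm_det_submatrix_sq_zero (hU : U ∈ unitaryGroup (Fin d) 𝕜) (ha : Antitone a)
    (hb : Antitone b) (ha0 : ∀ i, 0 ≤ a i) (hb0 : ∀ i, 0 ≤ b i) (hL0 : ∀ p i, 0 ≤ L p i)
    (hL : ∀ i, Tendsto (fun p => L p i) atTop (𝓝 (a i * b i)))
    (h : ∀ p > 0, conjDiagonal (Q p) (fun i => L p i ^ p) =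
      conjDiagonal (diagonal (fun i => ((a i ^ (p / 2) : ℝ) : 𝕜)) * U) (fun i => b i ^ p))
    {m : Fin d} (hm : 0 < a m * b m) {f : Fin (m + 1) → Fin d} (hf : Function.Injective f)
    {l : Fin (m + 1)} (hl : a (f l) < a m) :
    Tendsto (fun p => ‖((Q p).submatrix f (Fin.castLE m.isLt)).det‖ ^ 2) atTop (𝓝 0) := by
  set c := Fin.castLE m.isLt
  set u : ℝ → ℝ := fun p => (∏ i, a (f i)) * (∏ i, b (c i)) / ∏ i, L p (c i)
  have hc (i : Fin (m + 1)) : 0 < a (c i) * b (c i) :=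
    have him : c i ≤ m := Nat.lt_succ_iff.mp i.isLt
    hm.trans_le (mul_le_mul (ha him) (hb him) (hb0 m) (ha0 _))
  have hlim : 0 < ∏ i, a (c i) * b (c i) := prod_pos fun i _ => hc i
  have hprodL : Tendsto (fun p => ∏ i, L p (c i)) atTop (𝓝 (∏ i, a (c i) * b (c i))) :=
    tendsto_finsetProd _ fun i _ => hL (c i)
  have hu : Tendsto u atTop (𝓝 ((∏ i, a (f i)) * (∏ i, b (c i)) / ∏ i, a (c i) * b (c i))) :=
    tendsto_const_nhds.div hprodL hlim.ne'
  have hlt : (∏ i, a (f i)) * (∏ i, b (c i)) / ∏ i, a (c i) * b (c i) < 1 := by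
    rw [div_lt_one hlim, prod_mul_distrib]
    exact mul_lt_mul_of_pos_right (prod_comp_lt_prod_castLE ha ha0 hf hl)
      (prod_pos fun i _ => pos_of_mul_pos_right (hc i) (ha0 _))
  have hu0 (p : ℝ) : 0 ≤ u p := div_nonneg (mul_nonneg (prod_nonneg fun _ _ => ha0 _)
    (prod_nonneg fun _ _ => hb0 _)) (prod_nonneg fun _ _ => hL0 _ _)
  refine squeeze_zero' (.of_forall fun p => sq_nonneg _) ?_
    (tendsto_rpow_self_zero_of_tendsto_lt_one (.of_forall hu0) hu hlt)
  filter_upwards [eventually_gt_atTop 0, hprodL.eventually_const_lt hlim] with p hp hLp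
  exact norm_det_submatrix_sq_le_rpow m.isLt hU ha0 hb hb0 (hL0 p) hp.le (h p hp) hLp hf

theorem tendsto_apply_zero_of_le_of_lt (hU : U ∈ unitaryGroup (Fin d) 𝕜)
    (hQ : ∀ p, Q p ∈ unitaryGroup (Fin d) 𝕜) (ha : Antitone a)
    (hb : Antitone b) (ha0 : ∀ i, 0 ≤ a i) (hb0 : ∀ i, 0 ≤ b i) (hL0 : ∀ p i, 0 ≤ L p i)
    (hL : ∀ i, Tendsto (fun p => L p i) atTop (𝓝 (a i * b i)))
    (h : ∀ p > 0, conjDiagonal (Q p) (fun i => L p i ^ p) =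
      conjDiagonal (diagonal (fun i => ((a i ^ (p / 2) : ℝ) : 𝕜)) * U) (fun i => b i ^ p))
    {m i j : Fin d} (hm : 0 < a m * b m) (hi : i ≤ m) (hj : a j < a m) :
    Tendsto (fun p => Q p j i) atTop (𝓝 0) := by
  refine tendsto_zero_of_norm_sq_tendsto_zero (squeeze_zero (fun p => sq_nonneg _) (fun p =>
    norm_sq_apply_le_sum_norm_det_submatrix_sq (hQ p) (Fin.castLE_injective m.isLt) j
      ⟨i, Nat.lt_succ_of_le hi⟩) ?_)
  rw [← sum_const_zero]
  refine tendsto_finsetSum _ fun f hf => ?_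
  simp only [mem_filter, mem_univ, true_and] at hf
  obtain ⟨l, rfl⟩ := hf
  by_cases hinj : Function.Injective f
  · exact tendsto_norm_det_submatrix_sq_zero hU ha hb ha0 hb0 hL0 hL h hm hinj hj
  · have hdet (p : ℝ) : ((Q p).submatrix f (Fin.castLE m.isLt)).det = 0 := by
      rw [← det_transpose, transpose_submatrix,
        det_submatrix_eq_zero_of_not_injective _ _ hinj]
    simp only [hdet, norm_zero, ne_eq, OfNat.ofNat_ne_zero, not_false_eq_true, zero_pow,
      tendsto_const_nhds]

theorem tendsto_apply_zero_of_mul_ne_mul (hU : U ∈ unitaryGroup (Fin d) 𝕜)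
    (hQ : ∀ p, Q p ∈ unitaryGroup (Fin d) 𝕜) (ha : StrictAnti a)
    (hb : Antitone b) (ha0 : ∀ i, 0 ≤ a i) (hb0 : ∀ i, 0 ≤ b i) (hL0 : ∀ p i, 0 ≤ L p i)
    (hL : ∀ i, Tendsto (fun p => L p i) atTop (𝓝 (a i * b i)))
    (h : ∀ p > 0, conjDiagonal (Q p) (fun i => L p i ^ p) =
      conjDiagonal (diagonal (fun i => ((a i ^ (p / 2) : ℝ) : 𝕜)) * U) (fun i => b i ^ p))
    {i j : Fin d} (hij : a j * b j ≠ a i * b i) : Tendsto (fun p => Q p j i) atTop (𝓝 0) := by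
  have hanti : Antitone fun i => a i * b i := fun x y hxy =>
    mul_le_mul (ha.antitone hxy) (hb hxy) (hb0 y) (ha0 x)
  have hpos {x y : Fin d} (hxy : x < y) (hne : a y * b y ≠ a x * b x) : 0 < a x * b x :=
    (mul_nonneg (ha0 y) (hb0 y)).trans_lt ((hanti hxy.le).lt_of_ne hne)
  have hlower {m x y : Fin d} (hm : 0 < a m * b m) (hx : x ≤ m) (hy : m < y) :
      Tendsto (fun p => Q p y x) atTop (𝓝 0) :=
    tendsto_apply_zero_of_le_of_lt hU hQ ha.antitone hb ha0 hb0 hL0 hL h hm hx (ha hy)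
  rcases lt_or_gt_of_ne (ne_of_apply_ne (fun x => a x * b x) hij) with hlt | hlt
  · refine tendsto_apply_zero_of_compl_block hQ (s := Iic j) (fun y hy x hx => ?_)
      (mem_Iic.mpr le_rfl) (by simpa using hlt)
    exact hlower (hpos hlt hij.symm) (mem_Iic.mp hx) (by simpa using hy)
  · exact hlower (hpos hlt hij) le_rfl hlt

end Decay

/-- If the eigenvalues of `A` are all distinct and the limiting eigenvalues satisfy
`λ_i = a_i b_i` for all `i`, then
`lim_{p→∞} (A^{p/2} B^p A^{p/2})^{1/p} = V diag(a_1 b_1, …, a_d b_d) V*`. -/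
theorem anti_lie_trotter_maximal_case_distinct_eigenvalues
    {d : ℕ} (A B V W : Matrix (Fin d) (Fin d) ℂ) (a b : Fin d → ℝ)
    (hA : A.PosSemidef) (hB : B.PosSemidef)
    (hV : V ∈ Matrix.unitaryGroup (Fin d) ℂ)
    (hW : W ∈ Matrix.unitaryGroup (Fin d) ℂ)
    (ha : StrictAnti a) (hb : Antitone b)
    (ha0 : ∀ i, 0 ≤ a i) (hb0 : ∀ i, 0 ≤ b i)
    (hAd : A = V * Matrix.diagonal (fun i => (a i : ℂ)) * Vᴴ)
    (hBd : B = W * Matrix.diagonal (fun i => (b i : ℂ)) * Wᴴ)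
    (lam : Fin d → ℝ)
    (hlam : ∀ i, Tendsto (fun p : ℝ => eigsDesc (Zmat A B p) i) atTop (𝓝 (lam i)))
    (hmax : ∀ i, lam i = a i * b i) :
    Tendsto (fun p : ℝ => Zmat A B p) atTop
      (𝓝 (V * Matrix.diagonal (fun i => ((a i * b i : ℝ) : ℂ)) * Vᴴ)) := by
  obtain rfl : A = conjDiagonal V a := hAd
  obtain rfl : B = conjDiagonal W b := hBd
  set Z := Zmat (conjDiagonal V a) (conjDiagonal W b)
  choose Q hQ hZ using exists_Zmat_eq_conjDiagonal_mul hA hB hV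
  have hL (i : Fin d) : Tendsto (fun p => eigsDesc (Z p) i) atTop (𝓝 (a i * b i)) :=
    hmax i ▸ hlam i
  have hL0 (p : ℝ) (i : Fin d) : 0 ≤ eigsDesc (Z p) i :=
    eigsDesc_nonneg (posSemidef_Zmat hA hB p) i
  have hoff (j i : Fin d) (hji : a j * b j ≠ a i * b i) :
      Tendsto (fun p => Q p j i) atTop (𝓝 0) :=
    tendsto_apply_zero_of_mul_ne_mul (mul_mem (Unitary.star_mem hV) hW) hQ ha hb ha0 hb0 hL0 hL
      (fun p hp => conjDiagonal_rpow_eq_of_Zmat_eq hV hW (hQ p) ha0 hb0 hp.ne' (hZ p)) hji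
  have hdiag := tendsto_conjDiagonal_diagonal hQ hL hoff
  refine ((hdiag.const_mul V).mul_const Vᴴ).congr fun p => ?_
  rw [mul_conjDiagonal_mul_conjTranspose, ← hZ p]
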